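/- Let h(t) = ∑_{j≥0} c_j t^j ∈ H²(𝔻) with h(0) ≠ 0, fix k ≥ 1, and define f ∈ H²(𝔻²) by f(z,w) = h(χ_k), where χ_k is the k-th monomial in degree-lexicographic order. For k, j ≥ 0 let £(k,j) denote the degree-lexicographic index of the monomial (χ_k)^j, i.e., χ_{£(k,j)} = (χ_k)^j. Then for each j ≥ 0 and each N with £(k,j) ≤ N ≤ £(k,j+1) − 1, one has p_N*[f] = p_{£(k,j)}*[f]. -/

import Mathlib

noncomputable section

open Finset

/-- Coefficients of a formal power series in two variables `z, w`
(the coefficient of `z^j w^k` is the value at `(j, k)`). -/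
abbrev Coef := ℕ × ℕ → ℂ

/-- Coefficients of a formal power series in one variable. -/
abbrev Coef1 := ℕ → ℂ

/-- Membership in the Hardy space `H²(𝔻²)`: square-summable coefficients. -/
def MemH2 (f : Coef) : Prop := Summable (fun jk : ℕ × ℕ => ‖f jk‖ ^ 2)

/-- Membership in the Hardy space `H²(𝔻)`. -/
def MemH2₁ (f : Coef1) : Prop := Summable (fun j : ℕ => ‖f j‖ ^ 2)

/-- The `H²(𝔻²)` inner product `⟨f, g⟩ = ∑ a_{jk} conj (b_{jk})`. -/
def Hinner (f g : Coef) : ℂ := ∑' jk : ℕ × ℕ, f jk * (starRingEnd ℂ) (g jk)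

/-- The `H²(𝔻²)` norm. -/
def Hnorm (f : Coef) : ℝ := Real.sqrt (∑' jk : ℕ × ℕ, ‖f jk‖ ^ 2)

/-- The `H²(𝔻)` norm. -/
def Hnorm1 (f : Coef1) : ℝ := Real.sqrt (∑' j : ℕ, ‖f j‖ ^ 2)

/-- The constant function `1` as an element of `H²(𝔻²)`. -/
def oneH : Coef := fun jk => if jk = (0, 0) then 1 else 0

/-- The constant function `1` as an element of `H²(𝔻)`. -/
def oneH1 : Coef1 := fun j => if j = 0 then 1 else 0

/-- Cauchy product `q·f` of two formal power series in two variables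
(used for multiplication of `f ∈ H²(𝔻²)` by a polynomial `q`). -/
def pmul (q f : Coef) : Coef := fun jk =>
  ∑ a ∈ range (jk.1 + 1), ∑ b ∈ range (jk.2 + 1), q (a, b) * f (jk.1 - a, jk.2 - b)

/-- Multiplication of a one-variable power series by a one-variable polynomial. -/
def pmul1 (q : Polynomial ℂ) (f : Coef1) : Coef1 := fun j =>
  ∑ a ∈ range (j + 1), q.coeff a * f (j - a)

/-- Degree-lexicographic enumeration of the monomials in `z, w`:
`chi 0 = (0,0) ↔ 1`, `chi 1 = (1,0) ↔ z`, `chi 2 = (0,1) ↔ w`,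
`chi 3 = (2,0) ↔ z²`, `chi 4 = (1,1) ↔ zw`, `chi 5 = (0,2) ↔ w²`, … -/
def chi : ℕ → ℕ × ℕ
  | 0 => (0, 0)
  | n + 1 =>
    let p := chi n
    if p.1 = 0 then (p.2 + 1, 0) else (p.1 - 1, p.2 + 1)

/-- The monomial `z^(ab.1) w^(ab.2)` as a coefficient function. -/
def mono (ab : ℕ × ℕ) : Coef := fun jk => if jk = ab then 1 else 0

/-- `p` lies in `P_n = span {χ_0, …, χ_n}`. -/
def inPn (n : ℕ) (p : Coef) : Prop := ∀ ab, p ab ≠ 0 → ∃ k ≤ n, chi k = ab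

/-- `p` is a (two-variable) polynomial: finitely many nonzero coefficients. -/
def IsPoly2 (p : Coef) : Prop := (Function.support p).Finite

/-- Evaluation of a power series at the point `(z, w)`
(absolutely convergent for `f ∈ H²(𝔻²)` and `(z,w)` in the open bidisk,
and for any polynomial at any point). -/
def heval (f : Coef) (z w : ℂ) : ℂ := ∑' jk : ℕ × ℕ, f jk * z ^ jk.1 * w ^ jk.2

/-- `p` is the `n`-th optimal polynomial approximant to `1/f`:
`p ∈ P_n` and `p` minimizes `‖qf - 1‖` over `q ∈ P_n`. -/
def IsOPA (f : Coef) (n : ℕ) (p : Coef) : Prop :=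
  inPn n p ∧ ∀ q : Coef, inPn n q →
    Hnorm (pmul p f - oneH) ≤ Hnorm (pmul q f - oneH)

/-- `q` has bidegree `(N, M)`: degree `N` in `z` and degree `M` in `w`. -/
def HasBidegree (q : Coef) (N M : ℕ) : Prop :=
  (∀ a b : ℕ, q (a, b) ≠ 0 → a ≤ N ∧ b ≤ M) ∧ (∃ b, q (N, b) ≠ 0) ∧ (∃ a, q (a, M) ≠ 0)

/-- Reflection of a polynomial of bidegree `(N, M)`:
the coefficient of `z^j w^k` is `conj` of the coefficient of `z^(N-j) w^(M-k)`. -/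
def reflPoly (N M : ℕ) (q : Coef) : Coef := fun jk =>
  if jk.1 ≤ N ∧ jk.2 ≤ M then (starRingEnd ℂ) (q (N - jk.1, M - jk.2)) else 0

/-- The degree-lexicographic index of the monomial `z^(ab.1) w^(ab.2)`
(the inverse of `chi`). -/
def lexIndex (ab : ℕ × ℕ) : ℕ := (ab.1 + ab.2) * (ab.1 + ab.2 + 1) / 2 + ab.2

/-- `pound k j` = the degree-lexicographic index `£(k,j)` of the monomial `(χ_k)^j`. -/
def pound (k j : ℕ) : ℕ := lexIndex (j * (chi k).1, j * (chi k).2)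

/-- The linear factor `z - α` as a coefficient function. -/
def linZ (α : ℂ) : Coef := fun jk => if jk = (1, 0) then 1 else if jk = (0, 0) then -α else 0

/-- The linear factor `w - β` as a coefficient function. -/
def linW (β : ℂ) : Coef := fun jk => if jk = (0, 1) then 1 else if jk = (0, 0) then -β else 0


theorem lexIndex_chi (n : ℕ) : lexIndex (chi n) = n := by
  induction n with
  | zero => simp [chi, lexIndex]
  | succ n ih =>
    have key : ∀ p : ℕ × ℕ, lexIndex p = n →
        lexIndex (if p.1 = 0 then (p.2 + 1, 0) else (p.1 - 1, p.2 + 1)) = n + 1 := by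
      rintro ⟨a, b⟩ hp
      simp only [lexIndex] at hp
      rcases a with _ | a
      · simp only [lexIndex, if_true]
        have h1 : (b + 1 + 0) * (b + 1 + 0 + 1) = (0 + b) * (0 + b + 1) + 2 * (b + 1) := by ring
        rw [h1]
        omega
      · simp only [lexIndex, Nat.add_eq_zero_iff, one_ne_zero, and_false, if_false,
          Nat.add_sub_cancel]
        have h1 : a + (b + 1) = a + 1 + b := by ring
        rw [h1]
        omega
    exact key (chi n) ih

theorem lexIndex_mono {a b c d : ℕ} (h1 : a ≤ c) (h2 : b ≤ d) :
    lexIndex (a, b) ≤ lexIndex (c, d) := by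
  simp only [lexIndex]
  gcongr

theorem pound_mono (k : ℕ) {i j : ℕ} (h : i ≤ j) : pound k i ≤ pound k j :=
  lexIndex_mono (Nat.mul_le_mul_right _ h) (Nat.mul_le_mul_right _ h)

theorem MemH2.add' {f g : Coef} (hf : MemH2 f) (hg : MemH2 g) : MemH2 (f + g) := by
  unfold MemH2 at *
  refine Summable.of_nonneg_of_le (fun _ => by positivity) (fun x => ?_)
    ((hf.add hg).mul_left 2)
  have h1 : ‖(f + g) x‖ ≤ ‖f x‖ + ‖g x‖ := norm_add_le _ _
  have h2 := norm_nonneg ((f + g) x)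
  nlinarith [sq_nonneg (‖f x‖ - ‖g x‖)]

theorem MemH2.smul' {f : Coef} (c : ℂ) (hf : MemH2 f) : MemH2 (fun x => c * f x) := by
  unfold MemH2 at *
  simpa only [norm_mul, mul_pow] using hf.mul_left (‖c‖ ^ 2)

theorem MemH2.shift {f : Coef} (s : ℕ × ℕ) (hf : MemH2 f) :
    MemH2 (fun x => if s.1 ≤ x.1 ∧ s.2 ≤ x.2 then f (x.1 - s.1, x.2 - s.2) else 0) := by
  unfold MemH2 at *
  have hinj : Function.Injective (fun x : ℕ × ℕ => (x.1 + s.1, x.2 + s.2)) := by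
    rintro ⟨a, b⟩ ⟨c, d⟩ h
    simp only [Prod.mk.injEq] at h ⊢
    omega
  rw [← hinj.summable_iff]
  · simpa [Function.comp_def] using hf
  · rintro ⟨a, b⟩ hx
    dsimp only
    rw [if_neg]
    · simp
    · rintro ⟨h1, h2⟩
      apply hx
      refine ⟨(a - s.1, b - s.2), ?_⟩
      simp only [Prod.mk.injEq]
      omega

theorem MemH2.sum' {ι : Type} (F : Finset ι) (g : ι → Coef) (hg : ∀ i ∈ F, MemH2 (g i)) :
    MemH2 (∑ i ∈ F, g i) := by
  classical
  induction F using Finset.induction_on with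
  | empty => simp [MemH2, summable_zero]
  | insert a F ha ih =>
    rw [Finset.sum_insert ha]
    exact (hg a (by simp)).add' (ih fun i hi => hg i (by simp [hi]))

theorem inPn_finite {n : ℕ} {q : Coef} (hq : inPn n q) : (Function.support q).Finite := by
  refine ((Finset.range (n + 1)).image chi).finite_toSet.subset ?_
  intro x hx
  obtain ⟨k, hk, rfl⟩ := hq x hx
  simp only [Finset.coe_image, Set.mem_image, Finset.mem_coe, Finset.mem_range]
  exact ⟨k, by omega, rfl⟩

theorem memH2_pmul {n : ℕ} {q f : Coef} (hq : inPn n q) (hf : MemH2 f) : MemH2 (pmul q f) := by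
  have hfin := inPn_finite hq
  have : pmul q f = ∑ s ∈ hfin.toFinset,
      (fun x : ℕ × ℕ => q s * (if s.1 ≤ x.1 ∧ s.2 ≤ x.2 then f (x.1 - s.1, x.2 - s.2) else 0)) := by
    funext x
    rw [Finset.sum_apply, pmul, ← Finset.sum_product']
    have e1 : ∀ s ∈ range (x.1 + 1) ×ˢ range (x.2 + 1),
        q (s.1, s.2) * f (x.1 - s.1, x.2 - s.2) =
        q s * (if s.1 ≤ x.1 ∧ s.2 ≤ x.2 then f (x.1 - s.1, x.2 - s.2) else 0) := by
      intro s hs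
      simp only [Finset.mem_product, Finset.mem_range] at hs
      rw [if_pos (by omega)]
    rw [Finset.sum_congr rfl e1]
    rw [Finset.sum_subset (Finset.subset_union_left (s₂ := hfin.toFinset)),
      Finset.sum_subset (Finset.subset_union_right
        (s₁ := range (x.1 + 1) ×ˢ range (x.2 + 1)) (s₂ := hfin.toFinset))]
    · intro s _ hs
      simp only [Set.Finite.mem_toFinset, Function.mem_support, not_not] at hs
      rw [hs, zero_mul]
    · intro s _ hs
      simp only [Finset.mem_product, Finset.mem_range] at hs
      rw [if_neg (by omega), mul_zero]
  rw [this]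
  exact MemH2.sum' _ _ fun s _ => (hf.shift s).smul' _

theorem memH2_oneH : MemH2 oneH := by
  refine summable_of_ne_finset_zero (s := {(0, 0)}) ?_
  intro b hb
  simp only [Finset.mem_singleton] at hb
  simp [oneH, hb]

theorem memH2_err {n : ℕ} {q f : Coef} (hq : inPn n q) (hf : MemH2 f) :
    MemH2 (pmul q f - oneH) := by
  have h := (memH2_pmul hq hf).add' (memH2_oneH.smul' (-1))
  convert h using 1
  funext x
  simp [sub_eq_add_neg]

theorem pmul_cancel {d f : Coef} (hf : f (0, 0) ≠ 0) (h : pmul d f = 0) : d = 0 := by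
  have key : ∀ n a b : ℕ, a + b = n → d (a, b) = 0 := by
    intro n
    induction n using Nat.strong_induction_on with
    | _ n ih =>
      intro a b hab
      have h1 := congrFun h (a, b)
      simp only [pmul, Pi.zero_apply] at h1
      rw [Finset.sum_eq_single a, Finset.sum_eq_single b] at h1
      · simpa [hf] using h1
      · intro c hc hcb
        rw [Finset.mem_range] at hc
        rw [ih (a + c) (by omega) a c rfl, zero_mul]
      · intro hb
        simp at hb
      · intro c hc hca
        rw [Finset.mem_range] at hc
        refine Finset.sum_eq_zero fun e he => ?_
        rw [Finset.mem_range] at he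
        rw [ih (c + e) (by omega) c e rfl, zero_mul]
      · intro hb
        simp at hb
  funext ⟨a, b⟩
  exact key _ a b rfl

/-- Uniqueness of minimizers. -/
theorem opa_unique {f : Coef} (hf : MemH2 f) (hf0 : f (0, 0) ≠ 0) {n : ℕ} {p q : Coef}
    (hp : IsOPA f n p) (hq : IsOPA f n q) : p = q := by
  set A := pmul p f - oneH with hA
  set B := pmul q f - oneH with hB
  have sA : MemH2 A := memH2_err hp.1 hf
  have sB : MemH2 B := memH2_err hq.1 hf
  set m : Coef := fun x => (1 / 2) * (p x + q x) with hm
  have hmP : inPn n m := by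
    intro x hx
    by_cases h1 : p x = 0
    · by_cases h2 : q x = 0
      · exact absurd (by simp [hm, h1, h2]) hx
      · exact hq.1 x h2
    · exact hp.1 x h1
  set M := pmul m f - oneH with hM
  have sM : MemH2 M := memH2_err hmP hf
  have hMv : ∀ x, M x = (1 / 2) * (A x + B x) := by
    intro x
    have : pmul m f x = (1 / 2) * (pmul p f x + pmul q f x) := by
      simp only [pmul, ← Finset.sum_add_distrib, Finset.mul_sum, hm]
      refine Finset.sum_congr rfl fun a _ => Finset.sum_congr rfl fun b _ => ?_
      ring
    simp only [hM, hA, hB, Pi.sub_apply, this]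
    ring
  have hDv : ∀ x, pmul (p - q) f x = A x - B x := by
    intro x
    simp only [hA, hB, Pi.sub_apply, pmul, sub_mul, Finset.sum_sub_distrib]
    ring
  have par : ∀ x, ‖A x - B x‖ ^ 2 = 2 * ‖A x‖ ^ 2 + 2 * ‖B x‖ ^ 2 - 4 * ‖M x‖ ^ 2 := by
    intro x
    have h1 := parallelogram_law_with_norm ℝ (A x) (B x)
    have h2 : ‖M x‖ = 1 / 2 * ‖A x + B x‖ := by
      rw [hMv, norm_mul]
      norm_num
    rw [h2]
    nlinarith
  have nn : ∀ g : Coef, 0 ≤ ∑' x, ‖g x‖ ^ 2 := fun g => tsum_nonneg fun _ => by positivity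
  have iA : ∑' x, ‖A x‖ ^ 2 ≤ ∑' x, ‖M x‖ ^ 2 := by
    have := hp.2 m hmP
    exact (Real.sqrt_le_sqrt_iff (nn _)).1 this
  have iB : ∑' x, ‖B x‖ ^ 2 ≤ ∑' x, ‖M x‖ ^ 2 := by
    have := hq.2 m hmP
    exact (Real.sqrt_le_sqrt_iff (nn _)).1 this
  have hs : HasSum (fun x => ‖A x - B x‖ ^ 2)
      (2 * ∑' x, ‖A x‖ ^ 2 + 2 * ∑' x, ‖B x‖ ^ 2 - 4 * ∑' x, ‖M x‖ ^ 2) := by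
    simp only [par]
    exact ((sA.hasSum.mul_left 2).add (sB.hasSum.mul_left 2)).sub (sM.hasSum.mul_left 4)
  have hz : ∀ x, ‖A x - B x‖ ^ 2 = 0 := by
    intro x
    have h1 := le_hasSum hs x fun _ _ => by positivity
    exact le_antisymm (by linarith) (by positivity)
  have : p - q = 0 := by
    apply pmul_cancel hf0
    funext x
    rw [hDv]
    simpa using hz x
  exact sub_eq_zero.1 this

/-- Let `h ∈ H²(𝔻)` with `h(0) ≠ 0`, let `k ≥ 1`, and let
`f(z,w) = h(χ_k) ∈ H²(𝔻²)`. Then for each `j ≥ 0` and each `N` with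
`£(k,j) ≤ N ≤ £(k,j+1) - 1`, one has `p_N*[f] = p_{£(k,j)}*[f]`. -/
theorem statement13 (h : Coef1) (hh : MemH2₁ h) (hh0 : h 0 ≠ 0)
    (k : ℕ) (hk : 1 ≤ k) (f : Coef) (hfH2 : MemH2 f)
    (hval : ∀ j : ℕ, f (j * (chi k).1, j * (chi k).2) = h j)
    (hsupp : ∀ ab : ℕ × ℕ, f ab ≠ 0 → ∃ j : ℕ, ab = (j * (chi k).1, j * (chi k).2)) :
    ∀ j N : ℕ, pound k j ≤ N → N < pound k (j + 1) →
      ∀ p pN : Coef, IsOPA f (pound k j) p → IsOPA f N pN → pN = p := by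
  classical
  intro j N hjN hN p pN hp hpN
  have hf0 : f (0, 0) ≠ 0 := by
    have := hval 0
    simp only [zero_mul] at this
    rwa [this]
  have hv : (chi k).1 ≠ 0 ∨ (chi k).2 ≠ 0 := by
    by_contra hc
    push Not at hc
    have h1 := lexIndex_chi k
    rw [show chi k = (0, 0) from Prod.ext hc.1 hc.2] at h1
    simp [lexIndex] at h1
    omega
  set l := (chi k).1 with hl
  set m := (chi k).2 with hm
  let S : Set (ℕ × ℕ) := {x | ∃ i : ℕ, x = (i * l, i * m)}
  let r : Coef := fun x => if x ∈ S then pN x else 0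
  have hrN : inPn N r := by
    intro x hx
    by_cases hxS : x ∈ S
    · exact hpN.1 x (by simpa [r, hxS] using hx)
    · simp [r, hxS] at hx
  have hr : inPn (pound k j) r := by
    intro x hx
    by_cases hxS : x ∈ S
    · obtain ⟨n, hn, hnx⟩ := hrN x hx
      obtain ⟨i, hi⟩ := hxS
      have h1 : n = pound k i := by
        rw [← lexIndex_chi n, hnx, hi]
        rfl
      refine ⟨n, ?_, hnx⟩
      have hij : i ≤ j := by
        by_contra hc
        have := pound_mono k (show j + 1 ≤ i by omega)
        omega
      rw [h1]
      exact pound_mono k hij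
    · simp [r, hxS] at hx
  -- closure properties of `S`
  have hadd : ∀ a b c d : ℕ, (a, b) ∈ S → (c, d) ∈ S → (a + c, b + d) ∈ S := by
    rintro a b c d ⟨i, hi⟩ ⟨i', hi'⟩
    simp only [Prod.mk.injEq] at hi hi'
    refine ⟨i + i', ?_⟩
    rw [hi.1, hi.2, hi'.1, hi'.2, add_mul, add_mul]
  have hsub : ∀ a b c d : ℕ, (a + c, b + d) ∈ S → (c, d) ∈ S → (a, b) ∈ S := by
    rintro a b c d ⟨i, hi⟩ ⟨i', hi'⟩
    simp only [Prod.mk.injEq] at hi hi'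
    have hle : i' ≤ i := by
      rcases hv with h0 | h0
      · exact Nat.le_of_mul_le_mul_right (by omega : i' * l ≤ i * l) (Nat.pos_of_ne_zero h0)
      · exact Nat.le_of_mul_le_mul_right (by omega : i' * m ≤ i * m) (Nat.pos_of_ne_zero h0)
    refine ⟨i - i', ?_⟩
    rw [Nat.sub_mul, Nat.sub_mul]
    simp only [Prod.mk.injEq]
    omega
  have hpt : ∀ x, ‖(pmul r f - oneH) x‖ ≤ ‖(pmul pN f - oneH) x‖ := by
    rintro ⟨a, b⟩
    by_cases hxS : (a, b) ∈ S
    · apply le_of_eq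
      have : pmul r f (a, b) = pmul pN f (a, b) := by
        simp only [pmul]
        refine Finset.sum_congr rfl fun c hc => Finset.sum_congr rfl fun d hd => ?_
        rw [Finset.mem_range] at hc hd
        by_cases hz : f (a - c, b - d) = 0
        · simp [hz]
        · have hcd : (c, d) ∈ S := by
            apply hsub c d (a - c) (b - d) _ (hsupp _ hz)
            rwa [show c + (a - c) = a by omega, show d + (b - d) = b by omega]
          simp [r, hcd]
      simp only [Pi.sub_apply, this]
    · have h1 : pmul r f (a, b) = 0 := by
        simp only [pmul]
        refine Finset.sum_eq_zero fun c hc => Finset.sum_eq_zero fun d hd => ?_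
        rw [Finset.mem_range] at hc hd
        by_cases hz : f (a - c, b - d) = 0
        · simp [hz]
        · by_cases hcd : (c, d) ∈ S
          · exfalso
            apply hxS
            have := hadd c d (a - c) (b - d) hcd (hsupp _ hz)
            rwa [show c + (a - c) = a by omega, show d + (b - d) = b by omega] at this
          · simp [r, hcd]
      have h2 : oneH (a, b) = 0 := by
        have : (a, b) ≠ (0, 0) := by
          intro h0
          apply hxS
          rw [h0]
          exact ⟨0, by simp⟩
        simp only [oneH, this, if_false]
      simp only [Pi.sub_apply, h1, h2, sub_zero, norm_zero]
      exact norm_nonneg _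
  have hle : Hnorm (pmul r f - oneH) ≤ Hnorm (pmul pN f - oneH) := by
    apply Real.sqrt_le_sqrt
    refine Summable.tsum_le_tsum (fun x => ?_) (memH2_err hr hfH2) (memH2_err hpN.1 hfH2)
    exact pow_le_pow_left₀ (norm_nonneg _) (hpt x) 2
  have hpOPA : IsOPA f N p := by
    refine ⟨fun x hx => ?_, fun q hq => ?_⟩
    · obtain ⟨n, hn, h1⟩ := hp.1 x hx
      exact ⟨n, hn.trans hjN, h1⟩
    · exact (hp.2 r hr).trans (hle.trans (hpN.2 q hq))
  exact opa_unique hfH2 hf0 hpN hpOPA
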